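/- Let G be a finite tree (a connected simple graph with no cycles) with at least one edge. Then for every rotation system σ on G, the face permutation of (G,σ) has exactly one orbit (so the embedding has exactly one face), and consequently the genus of G is 0. -/

import Mathlib

namespace Genus

open SimpleGraph

variable {V : Type*} (G : SimpleGraph V)

/-- The dart-reversal involution, as a permutation of the darts. -/
def dartRev : Equiv.Perm G.Dart where
  toFun d := d.symm
  invFun d := d.symm
  left_inv d := d.symm_symm
  right_inv d := d.symm_symm

/-- A rotation system on `G`: a permutation of the darts sending each dart to a dart
with the same initial vertex, whose restriction to the darts leaving any fixed vertex
is a single cycle (equivalently, acts transitively on them). -/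
def IsRotationSystem (σ : Equiv.Perm G.Dart) : Prop :=
  (∀ d : G.Dart, (σ d).fst = d.fst) ∧
    ∀ d d' : G.Dart, d.fst = d'.fst → ∃ n : ℕ, (σ ^ n) d = d'

/-- The face permutation `φ(d) = σ(d̄)` of the embedding `(G, σ)`. -/
def facePerm (σ : Equiv.Perm G.Dart) : Equiv.Perm G.Dart := σ * dartRev G

/-- Two darts are equivalent iff they lie in the same face (same orbit of `φ`). -/
def faceSetoid (σ : Equiv.Perm G.Dart) : Setoid G.Dart :=
  ⟨(facePerm G σ).SameCycle,
    ⟨fun x => Equiv.Perm.SameCycle.refl _ x, fun h => h.symm, fun h h' => h.trans h'⟩⟩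

/-- The number of faces of the embedding `(G, σ)`: the number of orbits of the
face permutation on the darts. -/
noncomputable def numFaces (σ : Equiv.Perm G.Dart) : ℕ :=
  Nat.card (Quotient (faceSetoid G σ))

/-- `faceSize G σ e` is `f(e)`, the number of darts in the face containing `e`. -/
noncomputable def faceSize (σ : Equiv.Perm G.Dart) (e : G.Dart) : ℕ :=
  Nat.card {d : G.Dart // (facePerm G σ).SameCycle e d}

/-- The genus `1 + (|E| - |V| - |F|)/2` of the embedding `(G, σ)`. -/
noncomputable def embGenus [Fintype V] (σ : Equiv.Perm G.Dart) : ℚ :=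
  1 + ((Nat.card G.edgeSet : ℚ) - (Nat.card V : ℚ) - (numFaces G σ : ℚ)) / 2

/-- The set of genera of all embeddings of `G`; the genus of `G` is its minimum. -/
def genusSet [Fintype V] : Set ℚ :=
  {g : ℚ | ∃ σ : Equiv.Perm G.Dart, IsRotationSystem G σ ∧ embGenus G σ = g}

/-- A facial-like walk: a cyclic sequence of `k` pairwise distinct darts such that each dart
starts at the end vertex of the previous one, and a dart is followed by its reverse
iff its end vertex has degree 1. -/
def IsFacialLikeWalk [Fintype V] [DecidableRel G.Adj] {k : ℕ} (w : Fin k → G.Dart) : Prop :=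
  ∃ hk : 0 < k, Function.Injective w ∧
    ∀ i : Fin k,
      (w ⟨(i + 1) % k, Nat.mod_lt _ hk⟩).fst = (w i).snd ∧
        (w ⟨(i + 1) % k, Nat.mod_lt _ hk⟩ = (w i).symm ↔ G.degree (w i).snd = 1)

/-- `fw G e` is `f_w(e)`, the length of a shortest facial-like walk containing the dart `e`. -/
noncomputable def fw [Fintype V] [DecidableRel G.Adj] (e : G.Dart) : ℕ :=
  sInf {k : ℕ | ∃ w : Fin k → G.Dart, IsFacialLikeWalk G w ∧ ∃ i, w i = e}

end Genus

namespace Genus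

open SimpleGraph

theorem exists_isRotationSystem {V : Type*} (G : SimpleGraph V) [Finite G.Dart] :
    ∃ σ : Equiv.Perm G.Dart, IsRotationSystem G σ := by
  classical
  have := Fintype.ofFinite G.Dart
  choose f hf _ using fun v : V =>
    (Finset.univ.filter fun d : G.Dart => d.fst = v).exists_cycleOn
  have hfst : ∀ d : G.Dart, (f d.fst d).fst = d.fst := fun d => by
    simpa using (hf d.fst).1.mapsTo (x := d) (by simp)
  have hinj : Function.Injective fun d : G.Dart => f d.fst d := by
    intro d d' h
    have hd : d.fst = d'.fst := by
      rw [← hfst d, ← hfst d']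
      exact congrArg (fun x : G.Dart => x.fst) h
    simp only [hd] at h
    exact (f d'.fst).injective h
  let σ : Equiv.Perm G.Dart := Equiv.ofBijective _ (Finite.injective_iff_bijective.mp hinj)
  have hσ : ∀ d, σ d = f d.fst d := fun _ => rfl
  refine ⟨σ, hfst, fun d d' h => ?_⟩
  obtain ⟨n, -, hn⟩ := (hf d.fst).exists_pow_eq (a := d) (b := d') (by simp) (by simp [h])
  have key : ∀ n : ℕ, (σ ^ n) d = (f d.fst ^ n) d ∧ ((σ ^ n) d).fst = d.fst := by
    intro n
    induction n with
    | zero => simp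
    | succ k ih =>
      rw [pow_succ', pow_succ', Equiv.Perm.mul_apply, Equiv.Perm.mul_apply, hσ, hfst, ih.2, ih.1]
      exact ⟨rfl, rfl⟩
  exact ⟨n, (key n).1.trans hn⟩

variable {V : Type*} {G : SimpleGraph V} {σ : Equiv.Perm G.Dart}

theorem facePerm_apply (σ : Equiv.Perm G.Dart) (d : G.Dart) : facePerm G σ d = σ d.symm := rfl

theorem facePerm_apply_symm (σ : Equiv.Perm G.Dart) (d : G.Dart) :
    facePerm G σ d.symm = σ d := by
  rw [facePerm_apply, Dart.symm_symm]

theorem IsRotationSystem.facePerm_fst (hσ : IsRotationSystem G σ) (d : G.Dart) :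
    (facePerm G σ d).fst = d.snd :=
  hσ.1 d.symm

/-- A face through a bridge traverses it in both directions. -/
theorem IsRotationSystem.sameCycle_symm_of_isBridge [Finite G.Dart]
    (hσ : IsRotationSystem G σ) {d : G.Dart} (hd : G.IsBridge d.edge) :
    (facePerm G σ).SameCycle d d.symm := by
  by_contra hns
  have hnr : ¬ (G.deleteEdges {d.edge}).Reachable d.snd d.fst := fun h =>
    (isBridge_iff.mp hd) h.symm
  have key : ∀ n : ℕ, (G.deleteEdges {d.edge}).Reachable d.snd
      ((facePerm G σ ^ (n + 1)) d).fst := by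
    intro n
    induction n with
    | zero => simp [hσ.facePerm_fst]
    | succ k ih =>
      rw [pow_succ', Equiv.Perm.mul_apply, hσ.facePerm_fst]
      set e := (facePerm G σ ^ (k + 1)) d with he
      have hed : e ≠ d := fun h => hnr (h ▸ ih)
      have hes : e ≠ d.symm := fun h => hns ⟨(k + 1 : ℕ), by rw [zpow_natCast, ← he, h]⟩
      refine ih.trans (Adj.reachable ?_)
      rw [deleteEdges_adj]
      refine ⟨e.adj, fun h => ?_⟩
      rcases (dart_edge_eq_iff e d).mp h with h | h
      exacts [hed h, hes h]
  obtain ⟨n, hn⟩ := Nat.exists_eq_succ_of_ne_zero (orderOf_pos (facePerm G σ)).ne'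
  have h := key n
  rw [← Nat.succ_eq_add_one, ← hn, pow_orderOf_eq_one] at h
  exact hnr h

/-- If every face is closed under reversing darts, then a connected graph has at most one face. -/
theorem IsRotationSystem.sameCycle_of_forall_symm (hG : G.Preconnected)
    (hσ : IsRotationSystem G σ)
    (hs : ∀ d : G.Dart, (facePerm G σ).SameCycle d d.symm) (d d' : G.Dart) :
    (facePerm G σ).SameCycle d d' := by
  have hpow : ∀ (d : G.Dart) (n : ℕ), (facePerm G σ).SameCycle d ((σ ^ n) d) := by
    intro d n
    induction n with
    | zero => exact Equiv.Perm.SameCycle.refl _ _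
    | succ k ih =>
      rw [pow_succ', Equiv.Perm.mul_apply, ← facePerm_apply_symm]
      exact (ih.trans (hs _)).trans (Equiv.Perm.sameCycle_apply_right.mpr
        (Equiv.Perm.SameCycle.refl _ _))
  have hvert : ∀ d d' : G.Dart, d.fst = d'.fst → (facePerm G σ).SameCycle d d' := by
    intro d d' h
    obtain ⟨n, rfl⟩ := hσ.2 d d' h
    exact hpow d n
  have hwalk : ∀ {u v : V}, G.Walk u v → ∀ d d' : G.Dart, d.fst = u → d'.fst = v →
      (facePerm G σ).SameCycle d d' := by
    intro u v p
    induction p with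
    | nil => exact fun d d' h h' => hvert d d' (h.trans h'.symm)
    | cons hadj p ih =>
      intro d d' h h'
      let e : G.Dart := ⟨(_, _), hadj⟩
      exact ((hvert d e h).trans (hs e)).trans (ih e.symm d' rfl h')
  obtain ⟨p⟩ := hG d.fst d'.fst
  exact hwalk p d d' rfl rfl

theorem IsRotationSystem.numFaces_eq_one_of_isTree [Finite G.Dart] (hT : G.IsTree)
    (hE : G.edgeSet.Nonempty) (hσ : IsRotationSystem G σ) : numFaces G σ = 1 := by
  have hs : ∀ d : G.Dart, (facePerm G σ).SameCycle d d.symm := fun d =>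
    hσ.sameCycle_symm_of_isBridge
      (isAcyclic_iff_forall_isBridge.mp hT.isAcyclic d.edge_mem)
  obtain ⟨e, he⟩ := hE
  induction e with | _ u v =>
  rw [numFaces, Nat.card_eq_one_iff_unique]
  refine ⟨⟨?_⟩, ⟨Quotient.mk _ ⟨(u, v), he⟩⟩⟩
  rintro ⟨d⟩ ⟨d'⟩
  exact Quotient.sound (s := faceSetoid G σ)
    (hσ.sameCycle_of_forall_symm hT.connected.preconnected hs d d')

end Genus

open SimpleGraph in
/-- For a finite tree `G` with at least one edge, every rotation system on `G`
yields an embedding whose face permutation has exactly one orbit (exactly one face);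
consequently the genus of `G` (the minimum over all rotation systems of the genus
`1 + (|E| - |V| - |F|)/2` of the corresponding embedding) is `0`. -/
theorem tree_one_face_genus_zero
    {V : Type*} [Fintype V] [DecidableEq V] (G : SimpleGraph V)
    (hT : G.IsTree) (hE : G.edgeSet.Nonempty) :
    (∀ σ : Equiv.Perm G.Dart, Genus.IsRotationSystem G σ → Genus.numFaces G σ = 1) ∧
      IsLeast (Genus.genusSet G) 0 := by
  classical
  have hfaces : ∀ σ : Equiv.Perm G.Dart, Genus.IsRotationSystem G σ → Genus.numFaces G σ = 1 :=
    fun σ hσ => hσ.numFaces_eq_one_of_isTree hT hE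
  have hcard : (Nat.card G.edgeSet : ℚ) + 1 = Nat.card V := by
    rw [Nat.card_eq_fintype_card, Nat.card_eq_fintype_card, ← hT.card_edgeFinset,
      edgeFinset_card]
    push_cast
    rfl
  have hgenus : ∀ σ : Equiv.Perm G.Dart, Genus.IsRotationSystem G σ → Genus.embGenus G σ = 0 := by
    intro σ hσ
    rw [Genus.embGenus, hfaces σ hσ, ← hcard]
    norm_num
  refine ⟨hfaces, ?_, ?_⟩
  · obtain ⟨σ, hσ⟩ := Genus.exists_isRotationSystem G
    exact ⟨σ, hσ, hgenus σ hσ⟩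
  · rintro _ ⟨σ, hσ, rfl⟩
    exact (hgenus σ hσ).ge
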